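/- Existence of a dual maximizer: assume μ is a probability measure, there is a constant K with |J v i| ≤ K for all v ∈ D and i ∈ Fin M, and ω i > 0 for all i with Σ_{i ∈ Fin M} ω i = 1. Then there exists ψ* : Fin M → ℝ such that F(ψ) ≤ F(ψ*) for every ψ : Fin M → ℝ. -/

import Mathlib

open MeasureTheory

/-!
The objective `F` is continuous, and it is invariant under subtracting a constant from `ψ` because
`∑ i, ω i` is the total mass of `μ`. If `ψ j` is the largest coordinate of `ψ`, then
`ψᶜ v ≤ J v j - ψ j` gives `F ψ ≤ ∫ J · j ∂μ - (ψ j - ψ i) * ω i` for every `i`. Hence, after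
normalizing the largest coordinate to `0`, the superlevel set `{F 0 ≤ F}` is confined to a box,
where compactness yields a maximizer.
-/

lemma integrable_iInf_of_finite {D ι : Type*} [Finite ι] [Nonempty ι] [MeasurableSpace D]
    {μ : Measure D} {f : ι → D → ℝ} (hf : ∀ i, Integrable (f i) μ) :
    Integrable (fun v => ⨅ i, f i v) μ := by
  cases nonempty_fintype ι
  have hinf : Integrable (Finset.univ.inf' Finset.univ_nonempty f) μ :=
    Finset.inf'_induction (p := fun g => Integrable g μ) _ _ (fun _ h₁ _ h₂ => h₁.inf h₂)
      fun i _ => hf i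
  convert hinf using 2 with v
  rw [Finset.inf'_apply, Finset.inf'_univ_eq_ciInf]

section CTransform

variable {D ι : Type*} [Finite ι]

/-- The `c`-transform `ψᶜ v = min_i (J v i - ψ i)` of semi-discrete optimal transport with cost `J`.
For finite nonempty `ι` the infimum is a minimum; for empty `ι` it is `0`. -/
noncomputable def cTransform (J : D → ι → ℝ) (ψ : ι → ℝ) (v : D) : ℝ :=
  ⨅ i, (J v i - ψ i)

lemma cTransform_le (J : D → ι → ℝ) (ψ : ι → ℝ) (v : D) (i : ι) :
    cTransform J ψ v ≤ J v i - ψ i :=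
  ciInf_le (Set.finite_range _).bddBelow i

lemma cTransform_antitone (J : D → ι → ℝ) : Antitone (cTransform J) := fun _ _ h v =>
  ciInf_mono (Set.finite_range _).bddBelow fun i => sub_le_sub_left (h i) (J v i)

variable [Nonempty ι]

lemma cTransform_sub_const (J : D → ι → ℝ) (ψ : ι → ℝ) (c : ℝ) (v : D) :
    cTransform J (fun i => ψ i - c) v = cTransform J ψ v + c := by
  simp only [cTransform, ciInf_add (Set.finite_range fun i => J v i - ψ i).bddBelow,
    sub_sub_eq_add_sub, sub_add_eq_add_sub]

lemma integrable_cTransform [MeasurableSpace D] {μ : Measure D} [IsFiniteMeasure μ]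
    {J : D → ι → ℝ} (hJ : ∀ i, Integrable (fun v => J v i) μ) (ψ : ι → ℝ) :
    Integrable (cTransform J ψ) μ :=
  integrable_iInf_of_finite fun i => (hJ i).sub (integrable_const (ψ i))

end CTransform

lemma cTransform_le_add_dist {D ι : Type*} [Fintype ι] [Nonempty ι] (J : D → ι → ℝ)
    (ψ φ : ι → ℝ) (v : D) : cTransform J ψ v ≤ cTransform J φ v + dist ψ φ := by
  have hshift : (fun i => φ i - dist ψ φ) ≤ ψ := fun i =>
    sub_le_comm.mp <| (Real.sub_le_dist (φ i) (ψ i)).trans <|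
      (dist_comm _ _).trans_le (dist_le_pi_dist ψ φ i)
  calc cTransform J ψ v ≤ cTransform J (fun i => φ i - dist ψ φ) v :=
        cTransform_antitone J hshift v
    _ = cTransform J φ v + dist ψ φ := cTransform_sub_const J φ _ v

section DualObjective

variable {D ι : Type*} [MeasurableSpace D] [Fintype ι]

/-- The dual objective `F ψ = ∑ i, ψ i * ω i + ∫ ψᶜ dμ` of semi-discrete optimal transport from `μ`
to the weights `ω`. -/
noncomputable def dualObjective (μ : Measure D) (J : D → ι → ℝ) (ω ψ : ι → ℝ) : ℝ :=
  ∑ i, ψ i * ω i + ∫ v, cTransform J ψ v ∂μ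

variable [Nonempty ι] {μ : Measure D} [IsFiniteMeasure μ] {J : D → ι → ℝ} {ω : ι → ℝ}

lemma lipschitzWith_integral_cTransform (hJ : ∀ i, Integrable (fun v => J v i) μ) :
    LipschitzWith (measureUnivNNReal μ) fun ψ => ∫ v, cTransform J ψ v ∂μ := by
  refine LipschitzWith.of_le_add_mul _ fun ψ φ => ?_
  calc ∫ v, cTransform J ψ v ∂μ
      ≤ ∫ v, (cTransform J φ v + dist ψ φ) ∂μ :=
        integral_mono (integrable_cTransform hJ ψ)
          ((integrable_cTransform hJ φ).add (integrable_const _)) (cTransform_le_add_dist J ψ φ)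
    _ = ∫ v, cTransform J φ v ∂μ + measureUnivNNReal μ * dist ψ φ := by
        rw [integral_add (integrable_cTransform hJ φ) (integrable_const _), integral_const,
          smul_eq_mul]
        rfl

lemma continuous_dualObjective (hJ : ∀ i, Integrable (fun v => J v i) μ) :
    Continuous (dualObjective μ J ω) := by
  have hlin : Continuous fun ψ : ι → ℝ => ∑ i, ψ i * ω i := by fun_prop
  exact hlin.add (lipschitzWith_integral_cTransform hJ).continuous

lemma dualObjective_sub_const (hJ : ∀ i, Integrable (fun v => J v i) μ)
    (hωsum : ∑ i, ω i = μ.real Set.univ) (ψ : ι → ℝ) (c : ℝ) :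
    dualObjective μ J ω (fun i => ψ i - c) = dualObjective μ J ω ψ := by
  simp only [dualObjective, cTransform_sub_const, sub_mul, Finset.sum_sub_distrib,
    ← Finset.mul_sum, hωsum, integral_add (integrable_cTransform hJ ψ) (integrable_const c),
    integral_const, smul_eq_mul]
  ring

lemma dualObjective_le_of_forall_le (hJ : ∀ i, Integrable (fun v => J v i) μ)
    (hω : ∀ i, 0 ≤ ω i) (hωsum : ∑ i, ω i = μ.real Set.univ) {ψ : ι → ℝ} {j : ι}
    (hj : ∀ k, ψ k ≤ ψ j) (i : ι) :
    dualObjective μ J ω ψ ≤ ∫ v, J v j ∂μ - (ψ j - ψ i) * ω i := by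
  have hint : ∫ v, cTransform J ψ v ∂μ ≤ ∫ v, J v j ∂μ - ψ j * ∑ k, ω k := by
    calc ∫ v, cTransform J ψ v ∂μ ≤ ∫ v, (J v j - ψ j) ∂μ :=
          integral_mono (integrable_cTransform hJ ψ) ((hJ j).sub (integrable_const _))
            fun v => cTransform_le J ψ v j
      _ = ∫ v, J v j ∂μ - ψ j * ∑ k, ω k := by
          rw [integral_sub (hJ j) (integrable_const _), integral_const, smul_eq_mul, hωsum,
            mul_comm]
  have hgap : (ψ j - ψ i) * ω i ≤ ψ j * ∑ k, ω k - ∑ k, ψ k * ω k := by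
    calc (ψ j - ψ i) * ω i ≤ ∑ k, (ψ j - ψ k) * ω k :=
          Finset.single_le_sum (f := fun k => (ψ j - ψ k) * ω k)
            (fun k _ => mul_nonneg (sub_nonneg.mpr (hj k)) (hω k)) (Finset.mem_univ i)
      _ = ψ j * ∑ k, ω k - ∑ k, ψ k * ω k := by
          simp only [sub_mul, Finset.sum_sub_distrib, Finset.mul_sum]
  unfold dualObjective
  linarith

lemma exists_Icc_forall_le_dualObjective (hJ : ∀ i, Integrable (fun v => J v i) μ)
    (hω : ∀ i, 0 < ω i) (hωsum : ∑ i, ω i = μ.real Set.univ) (a : ℝ) :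
    ∃ b : ι → ℝ, ∀ ψ, a ≤ dualObjective μ J ω ψ →
      ∃ φ ∈ Set.Icc b 0, dualObjective μ J ω φ = dualObjective μ J ω ψ := by
  obtain ⟨m, hm⟩ := Finite.exists_max fun i => ∫ v, J v i ∂μ
  refine ⟨fun i => -((∫ v, J v m ∂μ - a) / ω i), fun ψ hψ => ?_⟩
  obtain ⟨j, hj⟩ := Finite.exists_max ψ
  refine ⟨fun i => ψ i - ψ j, ⟨fun i => ?_, fun i => sub_nonpos.mpr (hj i)⟩,
    dualObjective_sub_const hJ hωsum ψ (ψ j)⟩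
  have hgap : ψ j - ψ i ≤ (∫ v, J v m ∂μ - a) / ω i := by
    rw [le_div_iff₀ (hω i)]
    linarith [hm j, dualObjective_le_of_forall_le hJ (fun k => (hω k).le) hωsum hj i]
  exact neg_le.mp ((neg_sub _ _).trans_le hgap)

theorem dual_maximizer_exists_general (hJ : ∀ i, Integrable (fun v => J v i) μ)
    (hω : ∀ i, 0 < ω i) (hωsum : ∑ i, ω i = μ.real Set.univ) :
    ∃ ψstar, ∀ ψ, dualObjective μ J ω ψ ≤ dualObjective μ J ω ψstar := by
  obtain ⟨b, hb⟩ := exists_Icc_forall_le_dualObjective hJ hω hωsum (dualObjective μ J ω 0)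
  obtain ⟨φ₀, hφ₀, hFφ₀⟩ := hb 0 le_rfl
  obtain ⟨ψstar, -, hmax⟩ :=
    isCompact_Icc.exists_isMaxOn ⟨φ₀, hφ₀⟩ (continuous_dualObjective hJ).continuousOn
  refine ⟨ψstar, fun ψ => ?_⟩
  rcases le_total (dualObjective μ J ω ψ) (dualObjective μ J ω 0) with hψ | hψ
  · exact hψ.trans (hFφ₀.symm.trans_le (hmax hφ₀))
  · obtain ⟨φ, hφ, hFφ⟩ := hb ψ hψ
    exact hFφ.symm.trans_le (hmax hφ)

end DualObjective

/-- Existence of a dual maximizer: if `μ` is a probability measure, the cost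
`J` is uniformly bounded, and the weights are positive and sum to one, then
the dual objective `F` attains its maximum at some `ψ*`. -/
theorem dual_maximizer_exists {D : Type*} [MeasurableSpace D]
    (μ : Measure D) [IsProbabilityMeasure μ] (M : ℕ) (hM : 0 < M)
    (J : D → Fin M → ℝ) (hJ : ∀ i, Integrable (fun v => J v i) μ)
    (K : ℝ) (hK : ∀ v : D, ∀ i : Fin M, |J v i| ≤ K)
    (ω : Fin M → ℝ) (hωpos : ∀ i, 0 < ω i) (hωsum : ∑ i, ω i = 1)
    (F : (Fin M → ℝ) → ℝ)
    (hF : ∀ ψ : Fin M → ℝ,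
      F ψ = ∑ i, ψ i * ω i + ∫ v, (⨅ i, (J v i - ψ i)) ∂μ) :
    ∃ ψstar : Fin M → ℝ, ∀ ψ : Fin M → ℝ, F ψ ≤ F ψstar := by
  have : Nonempty (Fin M) := Fin.pos_iff_nonempty.mp hM
  obtain rfl : F = dualObjective μ J ω := funext hF
  exact dual_maximizer_exists_general hJ hωpos (hωsum.trans probReal_univ.symm)
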